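/- For every integer d ≥ 2 there exists a finite soluble group G with d(G) = d containing an element g such that e(G) - e(G,g) ≥ d·(log 16 - log 9)/log 9 - 8 (≈ 0.262·d - 8). -/

import Mathlib

open Subgroup

noncomputable def genProb (G : Type*) [Group G] (Y : Set G) (n : ℕ) : ℝ :=
  (Nat.card {v : Fin n → G // Subgroup.closure (Y ∪ Set.range v) = ⊤} : ℝ) /
    (Nat.card G : ℝ) ^ n

noncomputable def eTime (G : Type*) [Group G] (Y : Set G) : ℝ :=
  ∑' n : ℕ, (1 - genProb G Y n)

/-- `d(G)`: the minimal number of generators of `G`. -/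
noncomputable def dMin (G : Type*) [Group G] : ℕ :=
  sInf {n : ℕ | ∃ S : Finset G, S.card = n ∧ Subgroup.closure (S : Set G) = ⊤}

/-! Let `K` be a finite `p`-group acting faithfully on an abelian group `V` of order `q` prime to
`p`, transitively on the nonidentity elements, and let `H` be the relatively free group on `d`
generators in the variety generated by `K`. If `r` of the generators are sent to fixed generators
of `K`, the remaining ones can be sent to any of the `|K| ^ (d - r)` tuples in `K`, and `H` acts on
one copy of `V` for each of these tuples; let `G` be the resulting semidirect product.

Over a generating tuple of `K` the lifts which fail to generate `V ⋊ K` include the `q`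
coboundaries, so `n + 1` random elements of `G` generate it with probability at most
`(1 - q⁻ⁿ) ^ |K| ^ (d - r)`, whence `e(G)` is at least about `(d - r) * log |K| / log q`. Let
`g` have all its coordinates nontrivial. Any subgroup which contains `g` and maps onto `H` is `G`:
combining two elements of `H` which act alike on one copy of `V` and differently on another isolates
each coordinate. Hence adjoining `g` leaves only the generation of the `p`-group `H`, so
`e(G, g) ≤ d + p / (p - 1)`. Finally `d(G) = d`: if `g` is fixed by one of the `d` generators of
`H`, their product has `g` as a power, since the two orders are coprime.

The numbers come from `K = ΓL₁(9)`, of order `16`, acting on the additive group of the field with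
`9` elements, with `r = 2`. -/

lemma one_sub_pow_le_inv_mul {x : ℝ} {n : ℕ} (hn : 0 < n) (hx₀ : 0 < x) (hx₁ : x ≤ 1) :
    (1 - x) ^ n ≤ (n * x)⁻¹ :=
  calc (1 - x) ^ n ≤ Real.exp (-x) ^ n :=
        pow_le_pow_left₀ (sub_nonneg.2 hx₁) (Real.one_sub_le_exp_neg x) n
    _ = (Real.exp (n * x))⁻¹ := by rw [← Real.exp_nat_mul, mul_neg, Real.exp_neg]
    _ ≤ (n * x)⁻¹ := by
        have hnx : 0 < n * x := mul_pos (Nat.cast_pos.2 hn) hx₀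
        exact inv_anti₀ hnx ((le_add_of_nonneg_right zero_le_one).trans (Real.add_one_le_exp _))

lemma left_mem_zpowers_mul {G : Type*} [Group G] {a b : G} (hab : Commute a b) {m n : ℕ}
    (ha : a ^ m = 1) (hb : b ^ n = 1) (hmn : m.Coprime n) : a ∈ Subgroup.zpowers (a * b) := by
  obtain ⟨k, hk⟩ := exists_pow_eq_self_of_coprime
    (hmn.symm.coprime_dvd_right (orderOf_dvd_of_pow_eq_one ha))
  have hpow : (a * b) ^ (n * k) = a := by rw [pow_mul, hab.mul_pow, hb, mul_one, hk]
  have hmem := Subgroup.npow_mem_zpowers (a * b) (n * k)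
  rwa [hpow] at hmem

section GenerationProbability

variable {G : Type*} [Group G] (Y : Set G) (n : ℕ)

lemma genProb_nonneg : 0 ≤ genProb G Y n := by
  unfold genProb
  positivity

variable [Finite G]

lemma one_sub_genProb_eq :
    1 - genProb G Y n =
      ({v : Fin n → G | Subgroup.closure (Y ∪ Set.range v) ≠ ⊤}.ncard : ℝ) /
        (Nat.card G : ℝ) ^ n := by
  have hcard : (Nat.card G : ℝ) ^ n ≠ 0 := pow_ne_zero _ (Nat.cast_ne_zero.2 Nat.card_pos.ne')
  have hsum := Set.ncard_add_ncard_compl {v : Fin n → G | Subgroup.closure (Y ∪ Set.range v) = ⊤}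
  rw [Nat.card_fun, Nat.card_fin] at hsum
  rw [eq_div_iff hcard, sub_mul, one_mul, sub_eq_iff_eq_add', genProb, div_mul_cancel₀ _ hcard]
  exact_mod_cast hsum.symm

lemma genProb_le_one : genProb G Y n ≤ 1 := by
  rw [← sub_nonneg, one_sub_genProb_eq]
  positivity

lemma ncard_setOf_forall_mem (M : Subgroup G) :
    ({v : Fin n → G | ∀ j, v j ∈ M}.ncard : ℝ) =
      (M.index : ℝ)⁻¹ ^ n * (Nat.card G : ℝ) ^ n := by
  have hncard : {v : Fin n → G | ∀ j, v j ∈ M}.ncard = Nat.card M ^ n := by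
    rw [← Nat.card_coe_set_eq, ← Nat.card_fin n, ← Nat.card_fun, Nat.card_fin]
    exact Nat.card_congr (Equiv.subtypePiEquivPi (p := fun _ x ↦ x ∈ M))
  have hindex : (M.index : ℝ) ≠ 0 := Nat.cast_ne_zero.2 Subgroup.index_ne_zero_of_finite
  rw [hncard, ← M.card_mul_index]
  push_cast
  rw [mul_pow, inv_pow, mul_left_comm, inv_mul_cancel₀ (pow_ne_zero _ hindex), mul_one]

lemma one_sub_genProb_le_sum {ι : Type*} [Fintype ι] (M : ι → Subgroup G)
    (hM : ∀ N : Subgroup G, N ≠ ⊤ → ∃ i, N ≤ M i) :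
    1 - genProb G Y n ≤ ∑ i, ((M i).index : ℝ)⁻¹ ^ n := by
  have hsubset : {v : Fin n → G | Subgroup.closure (Y ∪ Set.range v) ≠ ⊤} ⊆
      ⋃ i, {v | ∀ j, v j ∈ M i} := by
    intro v hv
    obtain ⟨i, hi⟩ := hM _ hv
    exact Set.mem_iUnion.2 ⟨i, fun j ↦ hi (Subgroup.subset_closure (.inr ⟨j, rfl⟩))⟩
  have hncard := (Set.ncard_le_ncard hsubset).trans (Set.ncard_iUnion_le_of_fintype _)
  rw [one_sub_genProb_eq,
    div_le_iff₀ (pow_pos (Nat.cast_pos.2 Nat.card_pos) n), Finset.sum_mul]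
  simp_rw [← ncard_setOf_forall_mem]
  exact_mod_cast hncard

lemma summable_one_sub_genProb : Summable fun n ↦ 1 - genProb G Y n := by
  have := Fintype.ofFinite {M : Subgroup G // M ≠ ⊤}
  refine .of_nonneg_of_le (fun n ↦ sub_nonneg.2 (genProb_le_one Y n))
    (fun n ↦ one_sub_genProb_le_sum Y n ((↑) : {M : Subgroup G // M ≠ ⊤} → Subgroup G)
      fun N hN ↦ ⟨⟨N, hN⟩, le_rfl⟩)
    (summable_sum fun M _ ↦ summable_geometric_of_lt_one (by positivity) ?_)
  have hindex : 1 < M.1.index :=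
    Subgroup.one_lt_index_of_ne_top M.2
  exact inv_lt_one_of_one_lt₀ (by exact_mod_cast hindex)

variable {Y}

lemma eTime_le_of_one_sub_genProb_le_pow {d : ℕ} {r : ℝ} (hr₀ : 0 ≤ r) (hr₁ : r < 1)
    (h : ∀ n, 1 - genProb G Y (n + d) ≤ r ^ n) : eTime G Y ≤ d + (1 - r)⁻¹ := by
  have hsum := summable_one_sub_genProb Y
  rw [eTime, ← hsum.sum_add_tsum_nat_add d, ← tsum_geometric_of_lt_one hr₀ hr₁]
  refine add_le_add ?_ (((summable_nat_add_iff d).2 hsum).tsum_le_tsum h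
    (summable_geometric_of_lt_one hr₀ hr₁))
  simpa using Finset.sum_le_sum fun n (_ : n ∈ Finset.range d) ↦
    sub_le_self (1 : ℝ) (genProb_nonneg Y n)

lemma le_eTime_of_genProb_le_pow {N : ℕ} {r : ℝ} (hr₀ : 0 ≤ r) (hr₁ : r < 1)
    (h : ∀ n ≤ N, genProb G Y (n + 1) ≤ r ^ (N - n)) :
    N + 1 - (1 - r)⁻¹ ≤ eTime G Y := by
  have hfail (n : ℕ) : 0 ≤ 1 - genProb G Y n := sub_nonneg.2 (genProb_le_one Y n)
  have hgeom : ∑ n ∈ Finset.range (N + 1), r ^ (N - n) ≤ (1 - r)⁻¹ := by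
    rw [← tsum_geometric_of_lt_one hr₀ hr₁, Finset.sum_flip (fun n ↦ r ^ n)]
    exact (summable_geometric_of_lt_one hr₀ hr₁).sum_le_tsum _ fun n _ ↦ pow_nonneg hr₀ n
  calc N + 1 - (1 - r)⁻¹ ≤ ∑ n ∈ Finset.range (N + 1), (1 - r ^ (N - n)) := by
        rw [Finset.sum_sub_distrib, Finset.sum_const, Finset.card_range, nsmul_one]
        push_cast
        exact sub_le_sub_left hgeom _
    _ ≤ ∑ n ∈ Finset.range (N + 1), (1 - genProb G Y (n + 1)) :=
        Finset.sum_le_sum fun n hn ↦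
          sub_le_sub_left (h n (Nat.lt_succ_iff.1 (Finset.mem_range.1 hn))) 1
    _ ≤ ∑ n ∈ Finset.range (N + 2), (1 - genProb G Y n) := by
        rw [Finset.sum_range_succ' (fun n ↦ 1 - genProb G Y n)]
        exact le_add_of_nonneg_right (hfail 0)
    _ ≤ eTime G Y := (summable_one_sub_genProb Y).sum_le_tsum _ fun n _ ↦ hfail n

end GenerationProbability

section Rank

variable {G : Type*} [Group G]

lemma dMin_eq_rank [Group.FG G] : dMin G = Group.rank G := by
  refine le_antisymm (Nat.sInf_le (Group.rank_spec G)) (le_csInf ⟨_, Group.rank_spec G⟩ ?_)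
  rintro _ ⟨S, rfl, hS⟩
  exact Group.rank_le hS

lemma rank_le_card_of_closure_range_eq_top [Group.FG G] {ι : Type*} [Finite ι] {y : ι → G}
    (hy : Subgroup.closure (Set.range y) = ⊤) : Group.rank G ≤ Nat.card ι := by
  classical
  have := Fintype.ofFinite ι
  rw [← Set.image_univ, ← Finset.coe_univ, ← Finset.coe_image] at hy
  rw [Nat.card_eq_fintype_card]
  exact (Group.rank_le hy).trans Finset.card_image_le

lemma card_monoidHom_le [Group.FG G] (M : Type*) [Monoid M] [Finite M] :
    Nat.card (G →* M) ≤ Nat.card M ^ Group.rank G := by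
  obtain ⟨S, hScard, hS⟩ := Group.rank_spec G
  have hinj : Function.Injective fun (f : G →* M) (s : S) ↦ f s := fun f g hfg ↦
    MonoidHom.eq_of_eqOn_dense hS fun s hs ↦ congrFun hfg ⟨s, hs⟩
  refine (Nat.card_le_card_of_injective _ hinj).trans_eq ?_
  rw [Nat.card_fun, Nat.card_eq_fintype_card (α := S), Fintype.card_coe, hScard]

lemma closure_range_comp_eq_top {H ι : Type*} [Group H] {f : G →* H} (hf : Function.Surjective f)
    {v : ι → G} (hv : Subgroup.closure (Set.range v) = ⊤) :
    Subgroup.closure (Set.range (f ∘ v)) = ⊤ := by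
  rw [Set.range_comp, ← MonoidHom.map_closure, hv, Subgroup.map_top_of_surjective f hf]

end Rank

section PGroup

variable {p : ℕ} [Fact p.Prime] {G : Type*} [Group G] [Finite G]

lemma exists_le_index_eq_prime (hG : IsPGroup p G) {M : Subgroup G} (hM : M ≠ ⊤) :
    ∃ N : Subgroup G, M ≤ N ∧ N.index = p := by
  obtain ⟨k, hk⟩ := IsPGroup.iff_card.1 hG
  obtain ⟨j, hj⟩ := IsPGroup.iff_card.1 (hG.to_subgroup M)
  have hp := (Fact.out : p.Prime)
  have hjk : j < k := by
    refine (Nat.pow_lt_pow_iff_right hp.one_lt).1 ?_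
    rw [← hj, ← hk]
    exact (Subgroup.card_le_card_group M).lt_of_ne fun h ↦ hM (Subgroup.eq_top_of_card_eq M h)
  obtain ⟨i, rfl⟩ : ∃ i, k = i + 1 := ⟨k - 1, by omega⟩
  obtain ⟨N, hN, hMN⟩ := Sylow.exists_subgroup_card_pow_prime_le (m := i) p
    (hk ▸ pow_dvd_pow p i.le_succ) M hj (Nat.le_of_lt_succ hjk)
  refine ⟨N, hMN, Nat.eq_of_mul_eq_mul_left (pow_pos hp.pos i) ?_⟩
  rw [← hN, N.card_mul_index, hN, hk, pow_succ]

lemma exists_ker_eq_of_index_eq_prime (hG : IsPGroup p G) {N : Subgroup G} (hN : N.index = p) :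
    ∃ f : G →* Multiplicative (ZMod p), f.ker = N := by
  have hp := (Fact.out : p.Prime)
  obtain ⟨k, hk⟩ := IsPGroup.iff_card.1 hG
  have hk₀ : k ≠ 0 := by
    rintro rfl
    have hdvd := N.index_dvd_card
    rw [hN, hk, pow_zero] at hdvd
    exact hp.not_dvd_one hdvd
  have hnormal : N.Normal :=
    Subgroup.normal_of_index_eq_minFac_card (by rw [hN, hk, hp.pow_minFac hk₀])
  have hcard : Nat.card (G ⧸ N) = p := hN
  have := isCyclic_of_prime_card hcard
  let e : G ⧸ N ≃* Multiplicative (ZMod p) :=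
    mulEquivOfCyclicCardEq (by simp [hcard])
  refine ⟨(e : G ⧸ N →* Multiplicative (ZMod p)).comp (QuotientGroup.mk' N), ?_⟩
  rw [MonoidHom.ker_mulEquiv_comp, QuotientGroup.ker_mk']

lemma one_sub_genProb_add_rank_le (hG : IsPGroup p G) (Y : Set G) (n : ℕ) :
    1 - genProb G Y (n + Group.rank G) ≤ (p : ℝ)⁻¹ ^ n := by
  have hp := (Fact.out : p.Prime)
  have := Finite.of_injective ((⇑) : (G →* Multiplicative (ZMod p)) → _) DFunLike.coe_injective
  have := Fintype.ofFinite {f : G →* Multiplicative (ZMod p) // f.ker.index = p}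
  have hcover (M : Subgroup G) (hM : M ≠ ⊤) :
      ∃ f : {f : G →* Multiplicative (ZMod p) // f.ker.index = p}, M ≤ f.1.ker := by
    obtain ⟨N, hMN, hN⟩ := exists_le_index_eq_prime hG hM
    obtain ⟨f, rfl⟩ := exists_ker_eq_of_index_eq_prime hG hN
    exact ⟨⟨f, hN⟩, hMN⟩
  have hcard : Fintype.card {f : G →* Multiplicative (ZMod p) // f.ker.index = p} ≤
      p ^ Group.rank G := by
    rw [← Nat.card_eq_fintype_card]
    refine (Finite.card_subtype_le _).trans ((card_monoidHom_le _).trans_eq ?_)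
    rw [Nat.card_congr Multiplicative.toAdd, Nat.card_zmod]
  calc 1 - genProb G Y (n + Group.rank G)
      ≤ ∑ f : {f : G →* Multiplicative (ZMod p) // f.ker.index = p},
          (f.1.ker.index : ℝ)⁻¹ ^ (n + Group.rank G) := one_sub_genProb_le_sum Y _ _ hcover
    _ = Fintype.card {f : G →* Multiplicative (ZMod p) // f.ker.index = p} *
          (p : ℝ)⁻¹ ^ (n + Group.rank G) := by
        rw [Finset.sum_congr rfl fun f _ ↦ by rw [f.2], Finset.sum_const, nsmul_eq_mul,
          Finset.card_univ]
    _ ≤ (p : ℝ) ^ Group.rank G * (p : ℝ)⁻¹ ^ (n + Group.rank G) := by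
        gcongr
        exact_mod_cast hcard
    _ = (p : ℝ)⁻¹ ^ n := by
        rw [pow_add, mul_left_comm, ← mul_pow, mul_inv_cancel₀ (Nat.cast_ne_zero.2 hp.ne_zero),
          one_pow, mul_one]

end PGroup

section SemidirectProduct

open SemidirectProduct

variable {N H : Type*} [Group H]

instance finite_semidirectProduct [Group N] [Finite N] [Finite H] {φ : H →* MulAut N} :
    Finite (N ⋊[φ] H) :=
  .of_equiv _ equivProd.symm

/-- The tuples in `N` which lift the tuple `h` in `H` to a generating tuple of `N ⋊[φ] H`. -/
def generatingLifts [Group N] (φ : H →* MulAut N) {ι : Type*} (h : ι → H) : Set (ι → N) :=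
  {u | Subgroup.closure (Set.range fun i ↦ (⟨u i, h i⟩ : N ⋊[φ] H)) = ⊤}

section Counting

variable [Group N] [Finite N] [Finite H] {φ : H →* MulAut N} {n : ℕ}

lemma genProb_le_of_card_generatingLifts_le {c : ℕ}
    (hc : ∀ h : Fin n → H, Nat.card (generatingLifts φ h) ≤ c) :
    genProb (N ⋊[φ] H) ∅ n ≤ c / (Nat.card N : ℝ) ^ n := by
  have := Fintype.ofFinite (Fin n → H)
  let e : {v : Fin n → N ⋊[φ] H // Subgroup.closure (∅ ∪ Set.range v) = ⊤} ≃
      Σ h : Fin n → H, generatingLifts φ h :=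
    { toFun := fun v ↦ ⟨fun i ↦ (v.1 i).right, fun i ↦ (v.1 i).left,
        (congrArg Subgroup.closure (Set.empty_union _)).symm.trans v.2⟩
      invFun := fun p ↦ ⟨fun i ↦ ⟨p.2.1 i, p.1 i⟩,
        (congrArg Subgroup.closure (Set.empty_union _)).trans p.2.2⟩
      left_inv := fun _ ↦ rfl
      right_inv := fun _ ↦ rfl }
  have hcard : Nat.card {v : Fin n → N ⋊[φ] H // Subgroup.closure (∅ ∪ Set.range v) = ⊤} ≤
      Nat.card H ^ n * c := by
    rw [Nat.card_congr e, Nat.card_sigma]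
    refine (Finset.sum_le_card_nsmul _ _ c fun h _ ↦ hc h).trans_eq ?_
    rw [Finset.card_univ, ← Nat.card_eq_fintype_card, Nat.card_fun, Nat.card_fin, smul_eq_mul]
  have hH : (0 : ℝ) < Nat.card H := Nat.cast_pos.2 Nat.card_pos
  have hN : (0 : ℝ) < Nat.card N := Nat.cast_pos.2 Nat.card_pos
  rw [genProb, SemidirectProduct.card, Nat.cast_mul, mul_comm (Nat.card N : ℝ), mul_pow,
    ← mul_div_mul_left (c : ℝ) _ (pow_pos hH n).ne']
  gcongr
  exact_mod_cast hcard

lemma genProb_le_genProb_semidirectProduct {Y : Set (N ⋊[φ] H)}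
    (h : ∀ v : Fin n → N ⋊[φ] H, Subgroup.closure (Set.range fun i ↦ (v i).right) = ⊤ →
      Subgroup.closure (Y ∪ Set.range v) = ⊤) :
    genProb H ∅ n ≤ genProb (N ⋊[φ] H) Y n := by
  let lift (p : (Fin n → N) × {h : Fin n → H // Subgroup.closure (∅ ∪ Set.range h) = ⊤}) :
      {v : Fin n → N ⋊[φ] H // Subgroup.closure (Y ∪ Set.range v) = ⊤} :=
    ⟨fun i ↦ ⟨p.1 i, p.2.1 i⟩, h _ (by simpa only [Set.empty_union] using p.2.2)⟩
  have hlift : Function.Injective lift := by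
    rintro ⟨u, h, _⟩ ⟨u', h', _⟩ heq
    have hfun := funext_iff.1 (congrArg Subtype.val heq)
    obtain rfl : u = u' := funext fun i ↦ congrArg left (hfun i)
    obtain rfl : h = h' := funext fun i ↦ congrArg right (hfun i)
    rfl
  have hcard := Nat.card_le_card_of_injective lift hlift
  rw [Nat.card_prod, Nat.card_fun, Nat.card_fin] at hcard
  have hH : (0 : ℝ) < Nat.card H := Nat.cast_pos.2 Nat.card_pos
  have hN : (0 : ℝ) < Nat.card N := Nat.cast_pos.2 Nat.card_pos
  rw [genProb, genProb, SemidirectProduct.card, Nat.cast_mul, mul_pow,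
    ← mul_div_mul_left _ _ (pow_pos hN n).ne']
  gcongr
  exact_mod_cast hcard

end Counting

lemma map_rightHom_closure_range [Group N] {φ : H →* MulAut N} {ι : Type*} (v : ι → N ⋊[φ] H) :
    (Subgroup.closure (Set.range v)).map rightHom =
      Subgroup.closure (Set.range fun i ↦ (v i).right) := by
  rw [MonoidHom.map_closure, ← Set.range_comp]
  rfl

section Coboundary

variable [Group N] (φ : H →* MulAut N) {ι : Type*} (k : ι → H)

/-- The restriction to the elements `k i` of the principal crossed homomorphism attached to `w`:
these are the left components of the conjugates of `inr (k i)` by `inl w`. -/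
def coboundary (w : N) (i : ι) : N := w * (φ (k i) w)⁻¹

variable {φ k}

lemma coboundary_injective (hk : Subgroup.closure (Set.range k) = ⊤)
    (hφ : ∀ w : N, (∀ h, φ h w = w) → w = 1) : Function.Injective (coboundary φ k) := by
  intro w w' heq
  have hgen (i : ι) : φ (k i) (w'⁻¹ * w) = w'⁻¹ * w := by
    have hi : w * (φ (k i) w)⁻¹ = w' * (φ (k i) w')⁻¹ := congrFun heq i
    calc φ (k i) (w'⁻¹ * w) = w'⁻¹ * (w' * (φ (k i) w')⁻¹) * φ (k i) w := by
          rw [map_mul, map_inv, inv_mul_cancel_left]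
      _ = w'⁻¹ * w := by rw [← hi, ← mul_assoc, inv_mul_cancel_right]
  have hle : ⊤ ≤ (MulAction.stabilizer (MulAut N) (w'⁻¹ * w)).comap φ := by
    rw [← hk, Subgroup.closure_le]
    rintro _ ⟨i, rfl⟩
    exact hgen i
  exact (inv_mul_eq_one.1 (hφ _ fun h ↦ hle (Subgroup.mem_top h))).symm

lemma coboundary_notMem_generatingLifts [Nontrivial N] (w : N) :
    coboundary φ k w ∉ generatingLifts φ k := by
  intro htop
  let f : H →* N ⋊[φ] H := (MulAut.conj (inl w)).toMonoidHom.comp inr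
  have hle : ⊤ ≤ f.range := by
    rw [← show _ = ⊤ from htop, Subgroup.closure_le]
    rintro _ ⟨i, rfl⟩
    refine ⟨k i, ?_⟩
    ext <;> simp [f, coboundary]
  obtain ⟨u, hu⟩ := exists_ne (1 : N)
  obtain ⟨h, hh⟩ := hle (Subgroup.mem_top (MulAut.conj (inl w) (inl u)))
  exact hu (congrArg left ((MulAut.conj (inl w)).injective hh)).symm

lemma card_generatingLifts_le [Finite N] [Nontrivial N] [Finite ι]
    (hφ : ∀ w : N, (∀ h, φ h w = w) → w = 1) :
    Nat.card (generatingLifts φ k) ≤ Nat.card N ^ Nat.card ι - Nat.card N := by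
  rw [Nat.card_coe_set_eq]
  obtain hempty | ⟨u, hu⟩ := (generatingLifts φ k).eq_empty_or_nonempty
  · simp [hempty]
  have hk : Subgroup.closure (Set.range k) = ⊤ :=
    closure_range_comp_eq_top (f := rightHom) (v := fun i ↦ (⟨u i, k i⟩ : N ⋊[φ] H))
      rightHom_surjective hu
  have hsubset : Set.range (coboundary φ k) ⊆ (generatingLifts φ k)ᶜ := by
    rintro _ ⟨w, rfl⟩
    exact coboundary_notMem_generatingLifts w
  have hle := Set.ncard_le_ncard hsubset
  have hsum := (generatingLifts φ k).ncard_add_ncard_compl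
  rw [← Nat.card_coe_set_eq, Nat.card_range_of_injective (coboundary_injective hk hφ)] at hle
  rw [Nat.card_fun] at hsum
  omega

end Coboundary

section CommutativeKernel

variable [CommGroup N] {φ : H →* MulAut N} {M : Subgroup (N ⋊[φ] H)}

lemma apply_mem_comap_inl (hM : M.map rightHom = ⊤) (h : H) {u : N} (hu : u ∈ M.comap inl) :
    φ h u ∈ M.comap inl := by
  obtain ⟨m, hm, rfl⟩ : h ∈ M.map rightHom := hM ▸ Subgroup.mem_top h
  have hconj : m * inl u * m⁻¹ = inl (φ m.right u) := by
    ext <;> simp [mul_comm m.left]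
  have hmem := M.mul_mem (M.mul_mem hm hu) (M.inv_mem hm)
  rwa [hconj] at hmem

lemma eq_top_of_comap_inl_eq_top (hM : M.map rightHom = ⊤) (hinl : M.comap inl = ⊤) : M = ⊤ := by
  have hker : (rightHom : N ⋊[φ] H →* H).ker ≤ M := by
    rw [← range_inl_eq_ker_rightHom, MonoidHom.range_eq_map, Subgroup.map_le_iff_le_comap, hinl]
  rw [← Subgroup.comap_map_eq_self hker, hM, Subgroup.comap_top]

end CommutativeKernel

end SemidirectProduct

section InvariantSubgroup

variable {A K V : Type*} [Group K] [Group V] [MulDistribMulAction K V] [FaithfulSMul K V]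
  {F : Set (A → K)} {W : Subgroup (A → V)} {g : A → V}

lemma exists_mem_ne_one_and_forall_mem_eq_one
    (htrans : ∀ v w : V, v ≠ 1 → w ≠ 1 → ∃ c : K, c • v = w)
    (hconst : ∀ c, Function.const A c ∈ F) (hsep : F.SeparatesPoints)
    (hW : ∀ f ∈ F, ∀ u ∈ W, f • u ∈ W) (hg : g ∈ W) {a : A} (ha : g a ≠ 1)
    {s : Finset A} (has : a ∉ s) : ∃ u ∈ W, u a ≠ 1 ∧ ∀ b ∈ s, u b = 1 := by
  classical
  induction s using Finset.induction_on with
  | empty => exact ⟨g, hg, ha, fun b hb ↦ absurd hb (Finset.notMem_empty b)⟩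
  | insert b s _ ih =>
    rw [Finset.mem_insert, not_or] at has
    obtain ⟨u, huW, hua, hus⟩ := ih has.2
    obtain ⟨f, hf, hfab⟩ := hsep has.1
    obtain ⟨w, hw⟩ : ∃ w : V, f a • w ≠ f b • w := by
      contrapose! hfab
      exact FaithfulSMul.eq_of_smul_eq_smul hfab
    have hw₁ : w ≠ 1 := by
      rintro rfl
      exact hw (by rw [smul_one, smul_one])
    obtain ⟨c, hc⟩ := htrans _ w hua hw₁
    have hcu : Function.const A c • u ∈ W := hW _ (hconst c) u huW
    -- Replacing `f` by the constant `f b` changes nothing at `b`, so the quotient is trivial there.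
    refine ⟨(f • Function.const A c • u) / (Function.const A (f b) • Function.const A c • u),
      W.div_mem (hW f hf _ hcu) (hW _ (hconst _) _ hcu), ?_, ?_⟩
    · simpa [hc, div_eq_one] using hw
    · simp +contextual [hus]

lemma eq_top_of_forall_smul_mem [Finite A]
    (htrans : ∀ v w : V, v ≠ 1 → w ≠ 1 → ∃ c : K, c • v = w)
    (hconst : ∀ c, Function.const A c ∈ F) (hsep : F.SeparatesPoints)
    (hW : ∀ f ∈ F, ∀ u ∈ W, f • u ∈ W) (hg : g ∈ W) (hg₁ : ∀ a, g a ≠ 1) : W = ⊤ := by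
  classical
  have := Fintype.ofFinite A
  refine Subgroup.eq_top_iff' W |>.2 fun v ↦ Subgroup.pi_mem_of_mulSingle_mem v fun a ↦ ?_
  obtain hv | hv := eq_or_ne (v a) 1
  · rw [hv, Pi.mulSingle_one]
    exact W.one_mem
  obtain ⟨u, huW, hua, hu⟩ := exists_mem_ne_one_and_forall_mem_eq_one htrans hconst hsep hW hg
    (hg₁ a) (Finset.notMem_erase a Finset.univ)
  obtain ⟨c, hc⟩ := htrans _ _ hua hv
  have hsingle : Pi.mulSingle a (v a) = Function.const A c • u := by
    ext b
    obtain rfl | hb := eq_or_ne b a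
    · simp [hc]
    · simp [hb, hu b]
  exact hsingle ▸ hW _ (hconst c) u huW

end InvariantSubgroup

section PowerSemidirect

open SemidirectProduct

variable {A K H : Type*} (V : Type*) [Group H] [Group K] [CommGroup V] [MulDistribMulAction K V]
  (π : H →* A → K)

/-- The action of `H` on `A → V` through `π`, each coordinate of `A → K` acting on the
corresponding coordinate of `A → V`. -/
def coordAction : H →* MulAut (A → V) :=
  (MulDistribMulAction.toMulAut (A → K) (A → V)).comp π

/-- The semidirect product of `A → V` by `H`, which acts on each coordinate through `π`. -/
abbrev PowerSemidirect : Type _ := (A → V) ⋊[coordAction V π] H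

variable {V π}

lemma eval_mem_generatingLifts {ι : Type*} {h : ι → H} {u : ι → A → V}
    (hu : u ∈ generatingLifts (coordAction V π) h) {a : A}
    (hπ : Function.Surjective fun h ↦ π h a) :
    (fun i ↦ u i a) ∈ generatingLifts (MulDistribMulAction.toMulAut K V) fun i ↦ π (h i) a := by
  let f : PowerSemidirect V π →* V ⋊[MulDistribMulAction.toMulAut K V] K :=
    SemidirectProduct.map (Pi.evalMonoidHom _ a) ((Pi.evalMonoidHom _ a).comp π) fun _ ↦ rfl
  have hf : Function.Surjective f := by
    rintro ⟨x, k⟩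
    obtain ⟨h, rfl⟩ := hπ k
    exact ⟨⟨Function.const A x, h⟩, rfl⟩
  exact closure_range_comp_eq_top (v := fun i ↦ (⟨u i, h i⟩ : PowerSemidirect V π)) hf hu

section LowerBound

variable [Finite A] [Finite V] [Nontrivial V]

lemma card_generatingLifts_coordAction_le (hfix : ∀ w : V, (∀ c : K, c • w = w) → w = 1)
    (hπ : ∀ a, Function.Surjective fun h ↦ π h a) {ι : Type*} [Finite ι] (h : ι → H) :
    Nat.card (generatingLifts (coordAction V π) h) ≤
      (Nat.card V ^ Nat.card ι - Nat.card V) ^ Nat.card A := by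
  have := Fintype.ofFinite A
  have hcard (a : A) := card_generatingLifts_le (φ := MulDistribMulAction.toMulAut K V)
    (k := fun i ↦ π (h i) a) hfix
  let coords (u : generatingLifts (coordAction V π) h) (a : A) :
      generatingLifts (MulDistribMulAction.toMulAut K V) fun i ↦ π (h i) a :=
    ⟨fun i ↦ u.1 i a, eval_mem_generatingLifts u.2 (hπ a)⟩
  have hcoords : Function.Injective coords := fun u u' huu' ↦ Subtype.ext <| funext fun i ↦
    funext fun a ↦ congrFun (congrArg Subtype.val (congrFun huu' a)) i
  refine (Nat.card_le_card_of_injective _ hcoords).trans ?_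
  rw [Nat.card_pi, Nat.card_eq_fintype_card (α := A)]
  exact Finset.prod_le_pow_card _ _ _ fun a _ ↦ hcard a

lemma genProb_powerSemidirect_le [Finite H] (hfix : ∀ w : V, (∀ c : K, c • w = w) → w = 1)
    (hπ : ∀ a, Function.Surjective fun h ↦ π h a) (n : ℕ) :
    genProb (PowerSemidirect V π) ∅ (n + 1) ≤
      (1 - ((Nat.card V : ℝ) ^ n)⁻¹) ^ Nat.card A := by
  have hV : (Nat.card V : ℝ) ≠ 0 := Nat.cast_ne_zero.2 Nat.card_pos.ne'
  refine (genProb_le_of_card_generatingLifts_le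
    (card_generatingLifts_coordAction_le hfix hπ)).trans_eq ?_
  rw [Nat.card_fun, Nat.card_fin, Nat.cast_pow, Nat.cast_pow, ← pow_mul, mul_comm (Nat.card A),
    pow_mul, ← div_pow, Nat.cast_sub (Nat.le_self_pow n.succ_ne_zero _), sub_div, Nat.cast_pow,
    div_self (pow_ne_zero _ hV), pow_succ, div_mul_cancel_right₀ hV]

lemma le_eTime_powerSemidirect [Finite H] (hfix : ∀ w : V, (∀ c : K, c • w = w) → w = 1)
    (hπ : ∀ a, Function.Surjective fun h ↦ π h a) {N : ℕ} (hN : Nat.card V ^ N ≤ Nat.card A) :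
    N + 1 - (1 - (Nat.card V : ℝ)⁻¹)⁻¹ ≤ eTime (PowerSemidirect V π) ∅ := by
  have hV : (1 : ℝ) < Nat.card V := Nat.one_lt_cast.2 Finite.one_lt_card
  have hV₀ : (0 : ℝ) < Nat.card V := one_pos.trans hV
  refine le_eTime_of_genProb_le_pow (inv_nonneg.2 hV₀.le) (inv_lt_one_of_one_lt₀ hV) fun n hn ↦ ?_
  calc genProb (PowerSemidirect V π) ∅ (n + 1)
      ≤ (1 - ((Nat.card V : ℝ) ^ n)⁻¹) ^ Nat.card A := genProb_powerSemidirect_le hfix hπ n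
    _ ≤ (Nat.card A * ((Nat.card V : ℝ) ^ n)⁻¹)⁻¹ := by
        have hA : 0 < Nat.card A := (pow_pos Nat.card_pos N).trans_le hN
        exact one_sub_pow_le_inv_mul hA (inv_pos.2 (pow_pos hV₀ n))
          (inv_le_one_of_one_le₀ (one_le_pow₀ hV.le))
    _ ≤ ((Nat.card V : ℝ) ^ N * ((Nat.card V : ℝ) ^ n)⁻¹)⁻¹ := by
        gcongr
        exact_mod_cast hN
    _ = (Nat.card V : ℝ)⁻¹ ^ (N - n) := by rw [← pow_sub₀ _ hV₀.ne' hn, inv_pow]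

end LowerBound

section UpperBound

variable [Finite A] [FaithfulSMul K V] {g : A → V}

lemma eq_top_of_inl_mem {M : Subgroup (PowerSemidirect V π)}
    (htrans : ∀ v w : V, v ≠ 1 → w ≠ 1 → ∃ c : K, c • v = w)
    (hconst : ∀ c, Function.const A c ∈ Set.range π) (hsep : (Set.range π).SeparatesPoints)
    (hg : ∀ a, g a ≠ 1) (hM : M.map rightHom = ⊤) (hgM : inl g ∈ M) : M = ⊤ := by
  refine eq_top_of_comap_inl_eq_top hM (eq_top_of_forall_smul_mem htrans hconst hsep ?_ hgM hg)
  rintro _ ⟨h, rfl⟩ u hu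
  exact apply_mem_comap_inl hM h hu

lemma eTime_singleton_inl_le [Finite V] [Finite H] {p : ℕ} [Fact p.Prime] (hH : IsPGroup p H)
    (htrans : ∀ v w : V, v ≠ 1 → w ≠ 1 → ∃ c : K, c • v = w)
    (hconst : ∀ c, Function.const A c ∈ Set.range π) (hsep : (Set.range π).SeparatesPoints)
    (hg : ∀ a, g a ≠ 1) :
    eTime (PowerSemidirect V π) {inl g} ≤ Group.rank H + (1 - (p : ℝ)⁻¹)⁻¹ := by
  have hp : (1 : ℝ) < p := Nat.one_lt_cast.2 (Fact.out : p.Prime).one_lt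
  refine eTime_le_of_one_sub_genProb_le_pow (inv_nonneg.2 (one_pos.trans hp).le)
    (inv_lt_one_of_one_lt₀ hp) fun n ↦ ?_
  refine (sub_le_sub_left (genProb_le_genProb_semidirectProduct fun v hv ↦ ?_) 1).trans
    (one_sub_genProb_add_rank_le hH ∅ n)
  refine eq_top_of_inl_mem htrans hconst hsep hg (top_le_iff.1 ?_)
    (Subgroup.subset_closure (.inl rfl))
  rw [← hv, ← map_rightHom_closure_range]
  exact Subgroup.map_mono (Subgroup.closure_mono Set.subset_union_right)

lemma rank_powerSemidirect_le [Finite V] [Finite H]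
    (htrans : ∀ v w : V, v ≠ 1 → w ≠ 1 → ∃ c : K, c • v = w)
    (hconst : ∀ c, Function.const A c ∈ Set.range π) (hsep : (Set.range π).SeparatesPoints)
    (hg : ∀ a, g a ≠ 1) {ι : Type*} [Finite ι] {y : ι → H}
    (hy : Subgroup.closure (Set.range y) = ⊤) {i : ι} (hi : π (y i) • g = g)
    (hcoprime : (Nat.card V).Coprime (Nat.card H)) :
    Group.rank (PowerSemidirect V π) ≤ Nat.card ι := by
  classical
  let z : ι → PowerSemidirect V π :=
    Function.update (fun j ↦ inr (y j)) i (inl g * inr (y i))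
  have hz : (fun j ↦ (z j).right) = y := by
    ext j
    obtain rfl | hj := eq_or_ne j i
    · simp [z]
    · simp [z, hj]
  have hcomm : Commute (inl g : PowerSemidirect V π) (inr (y i)) := by
    have hconj := inl_aut (φ := coordAction V π) (y i) g
    rwa [show coordAction V π (y i) g = g from hi, map_inv, eq_mul_inv_iff_mul_eq] at hconj
  have hg_pow : (inl g : PowerSemidirect V π) ^ Nat.card V = 1 := by
    rw [← map_pow, show g ^ Nat.card V = 1 from funext fun a ↦ pow_card_eq_one', map_one]
  have hy_pow : (inr (y i) : PowerSemidirect V π) ^ Nat.card H = 1 := by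
    rw [← map_pow, pow_card_eq_one', map_one]
  refine rank_le_card_of_closure_range_eq_top (y := z)
    (eq_top_of_inl_mem htrans hconst hsep hg ?_ ?_)
  · rw [map_rightHom_closure_range, hz, hy]
  · have hzi : inl g * inr (y i) ∈ Subgroup.closure (Set.range z) :=
      Subgroup.subset_closure ⟨i, Function.update_self ..⟩
    exact Subgroup.zpowers_le.2 hzi (left_mem_zpowers_mul hcomm hg_pow hy_pow hcoprime)

end UpperBound

end PowerSemidirect

section RelativelyFree

/-- The relatively free group on `ι` in the variety generated by `K`: it is generated by the
coordinate functions on `ι → K`. -/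
def relFree (ι K : Type*) [Group K] : Subgroup ((ι → K) → K) :=
  Subgroup.closure (Set.range fun i ω ↦ ω i)

namespace relFree

variable {ι K : Type*} [Group K]

/-- The free generators of `relFree ι K`. -/
def gen (i : ι) : relFree ι K :=
  ⟨fun ω ↦ ω i, Subgroup.subset_closure ⟨i, rfl⟩⟩

/-- The homomorphism to `K` which takes the free generators to the values of `ω`. -/
def lift (ω : ι → K) : relFree ι K →* K :=
  (Pi.evalMonoidHom _ ω).comp (relFree ι K).subtype

lemma closure_range_gen : Subgroup.closure (Set.range (gen : ι → relFree ι K)) = ⊤ := by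
  have hrange : Set.range (gen : ι → relFree ι K) =
      ((↑) : relFree ι K → (ι → K) → K) ⁻¹' Set.range fun i ω ↦ ω i := by
    ext x
    exact exists_congr fun i ↦ Subtype.ext_iff
  rw [hrange]
  exact Subgroup.closure_closure_coe_preimage

lemma rank_eq [Finite ι] [Finite K] [Nontrivial K] :
    Group.rank (relFree ι K) = Nat.card ι := by
  refine le_antisymm (rank_le_card_of_closure_range_eq_top closure_range_gen) ?_
  have := Finite.of_injective ((⇑) : (relFree ι K →* K) → _) DFunLike.coe_injective
  have hlift : Function.Injective (lift : (ι → K) → relFree ι K →* K) := fun ω ω' h ↦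
    funext fun i ↦ DFunLike.congr_fun h (gen i)
  have hcard := (Nat.card_le_card_of_injective _ hlift).trans (card_monoidHom_le K)
  rw [Nat.card_fun] at hcard
  exact (Nat.pow_le_pow_iff_right Finite.one_lt_card).1 hcard

lemma isPGroup [Finite ι] [Finite K] {p : ℕ} [Fact p.Prime] (hK : IsPGroup p K) :
    IsPGroup p (relFree ι K) := by
  obtain ⟨n, hn⟩ := IsPGroup.iff_card.1 hK
  refine IsPGroup.to_subgroup (IsPGroup.of_card (n := n * Nat.card (ι → K)) ?_) _
  rw [Nat.card_fun, hn, pow_mul]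

section Specialize

variable {ρ μ : Type*}

/-- Sends the free generators indexed by `ρ` to the constants `κ`, and those indexed by `μ` to the
coordinate functions on `μ → K`. -/
def specialize (κ : ρ → K) : relFree (ρ ⊕ μ) K →* ((μ → K) → K) :=
  MonoidHom.pi fun ω ↦ lift (Sum.elim κ ω)

lemma const_mem_range_specialize {κ : ρ → K} (hκ : Subgroup.closure (Set.range κ) = ⊤) (c : K) :
    Function.const (μ → K) c ∈ Set.range (specialize κ : relFree (ρ ⊕ μ) K →* (μ → K) → K) := by
  have hle : ⊤ ≤ (specialize κ : relFree (ρ ⊕ μ) K →* _).range.comap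
      (Pi.constMonoidHom (μ → K) K) := by
    rw [← hκ, Subgroup.closure_le]
    rintro _ ⟨i, rfl⟩
    exact ⟨gen (.inl i), rfl⟩
  exact hle (Subgroup.mem_top c)

lemma separatesPoints_range_specialize (κ : ρ → K) :
    (Set.range (specialize κ : relFree (ρ ⊕ μ) K →* (μ → K) → K)).SeparatesPoints := by
  intro ω ω' hne
  obtain ⟨j, hj⟩ := Function.ne_iff.1 hne
  exact ⟨_, ⟨gen (.inr j), rfl⟩, hj⟩

end Specialize

end relFree

end RelativelyFree

section SemilinearGroup

open SemidirectProduct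

/-- The group `ΓL₁(F)` of the semilinear bijections `x ↦ u * σ x` of `F` over `k`. -/
abbrev SemilinearGroup (k F : Type*) [Field k] [Field F] [Algebra k F] : Type _ :=
  Fˣ ⋊[MulDistribMulAction.toMulAut (F ≃ₐ[k] F) Fˣ] (F ≃ₐ[k] F)

namespace SemilinearGroup

variable {k F : Type*} [Field k] [Field F] [Algebra k F]

instance : MulDistribMulAction (SemilinearGroup k F) (Multiplicative F) where
  smul x v := .ofAdd (x.left * x.right v.toAdd)
  one_smul v := congrArg Multiplicative.ofAdd (one_mul v.toAdd)
  mul_smul x y v := congrArg Multiplicative.ofAdd <|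
    show ((x.left * x.right • y.left : Fˣ) : F) * x.right (y.right v.toAdd) =
      x.left * x.right (y.left * y.right v.toAdd) by
    rw [map_mul, Units.val_mul, mul_assoc, AlgEquiv.smul_units_def, Units.coe_map,
      MonoidHom.coe_coe]
  smul_one x := congrArg Multiplicative.ofAdd <| show x.left * x.right (0 : F) = 0 by
    rw [map_zero, mul_zero]
  smul_mul x v w := congrArg Multiplicative.ofAdd <|
    show x.left * x.right (v.toAdd + w.toAdd) =
      x.left * x.right v.toAdd + x.left * x.right w.toAdd by
    rw [map_add, mul_add]

lemma smul_def (x : SemilinearGroup k F) (v : Multiplicative F) :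
    x • v = .ofAdd (x.left * x.right v.toAdd) := rfl

lemma inl_smul (u : Fˣ) (v : Multiplicative F) :
    (inl u : SemilinearGroup k F) • v = .ofAdd (u * v.toAdd) := rfl

instance : FaithfulSMul (SemilinearGroup k F) (Multiplicative F) where
  eq_of_smul_eq_smul {x y} hxy := by
    have hxy (a : F) : (x.left : F) * x.right a = y.left * y.right a :=
      Multiplicative.ofAdd.injective (hxy (.ofAdd a))
    have hleft : x.left = y.left := Units.ext (by simpa using hxy 1)
    refine SemidirectProduct.ext hleft (AlgEquiv.ext fun a ↦ ?_)
    simpa [hleft] using hxy a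

variable (k) in
lemma exists_smul_eq {v w : Multiplicative F} (hv : v ≠ 1) (hw : w ≠ 1) :
    ∃ c : SemilinearGroup k F, c • v = w := by
  have hv : v.toAdd ≠ 0 := hv
  have hw : w.toAdd ≠ 0 := hw
  refine ⟨inl (Units.mk0 _ hw / Units.mk0 _ hv), ?_⟩
  rw [inl_smul, Units.val_div_eq_div_val, Units.val_mk0, Units.val_mk0, div_mul_cancel₀ _ hv,
    ofAdd_toAdd]

lemma eq_one_of_forall_smul_eq (hF : 2 < Nat.card F) {w : Multiplicative F}
    (hw : ∀ c : SemilinearGroup k F, c • w = w) : w = 1 := by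
  have := Nat.finite_of_card_ne_zero (by lia : Nat.card F ≠ 0)
  have : Nontrivial Fˣ := Finite.one_lt_card_iff_nontrivial.1 (by rw [Nat.card_units]; lia)
  obtain ⟨u, hu⟩ := exists_ne (1 : Fˣ)
  have huw : (u : F) * w.toAdd = w.toAdd := hw (inl u)
  by_contra hw₁
  exact hu (Units.ext ((mul_eq_right₀ hw₁).1 huw))

variable (k F) in
lemma exists_generators_and_smul_ofAdd_one_eq [Finite F] :
    ∃ κ : Fin 2 → SemilinearGroup k F, Subgroup.closure (Set.range κ) = ⊤ ∧
      κ 1 • Multiplicative.ofAdd (1 : F) = .ofAdd 1 := by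
  obtain ⟨u, hu⟩ := IsCyclic.exists_generator (α := Fˣ)
  obtain ⟨σ, hσ⟩ := IsCyclic.exists_generator (α := F ≃ₐ[k] F)
  refine ⟨![inl u, inr σ], ?_, by simp [smul_def]⟩
  set S := Subgroup.closure (Set.range ![(inl u : SemilinearGroup k F), inr σ])
  have hinl : inl u ∈ S := Subgroup.subset_closure ⟨0, rfl⟩
  have hinr : inr σ ∈ S := Subgroup.subset_closure ⟨1, rfl⟩
  refine S.eq_top_iff'.2 fun x ↦ ?_
  obtain ⟨m, hm⟩ := hu x.left
  obtain ⟨n, hn⟩ := hσ x.right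
  rw [← inl_left_mul_inr_right x, ← show u ^ m = x.left from hm, ← show σ ^ n = x.right from hn,
    map_zpow, map_zpow]
  exact S.mul_mem (S.zpow_mem hinl m) (S.zpow_mem hinr n)

lemma card_eq [FiniteDimensional k F] [IsGalois k F] :
    Nat.card (SemilinearGroup k F) = (Nat.card F - 1) * Module.finrank k F := by
  rw [SemidirectProduct.card, IsGalois.card_aut_eq_finrank, Nat.card_units]

end SemilinearGroup

end SemilinearGroup

section GenericPowerSemidirect

open SemidirectProduct

variable {ρ K : Type*} (V μ : Type*) [Group K] [CommGroup V] [MulDistribMulAction K V] (κ : ρ → K)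

/-- The semidirect product of `(μ → K) → V` by the relatively free group on `ρ ⊕ μ`, which acts on
the coordinate `ω` through the specialization of its generators to `κ` and `ω`. -/
abbrev GenericPowerSemidirect : Type _ :=
  PowerSemidirect V (relFree.specialize κ : relFree (ρ ⊕ μ) K →* (μ → K) → K)

variable {V κ} [Finite ρ] [Finite μ] [Finite K] {p : ℕ} [Fact p.Prime]

lemma isSolvable_genericPowerSemidirect (hK : IsPGroup p K) :
    Group.IsSolvable (GenericPowerSemidirect V μ κ) := by
  have := (relFree.isPGroup (ι := ρ ⊕ μ) hK).isNilpotent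
  exact Group.isSolvable_of_ker_le_range inl rightHom range_inl_eq_ker_rightHom.ge

variable [Nontrivial K] [Finite V] [FaithfulSMul K V]

lemma rank_genericPowerSemidirect (hK : IsPGroup p K) (hV : (Nat.card V).Coprime p)
    (htrans : ∀ v w : V, v ≠ 1 → w ≠ 1 → ∃ c : K, c • v = w)
    (hκ : Subgroup.closure (Set.range κ) = ⊤) {i : ρ} {v : V} (hi : κ i • v = v) (hv : v ≠ 1) :
    Group.rank (GenericPowerSemidirect V μ κ) = Nat.card ρ + Nat.card μ := by
  obtain ⟨n, hn⟩ := IsPGroup.iff_card.1 (relFree.isPGroup (ι := ρ ⊕ μ) hK)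
  rw [← Nat.card_sum]
  refine le_antisymm ?_ ?_
  · exact rank_powerSemidirect_le htrans (relFree.const_mem_range_specialize hκ)
      (relFree.separatesPoints_range_specialize κ) (g := Function.const _ v) (fun _ ↦ hv)
      relFree.closure_range_gen (i := .inl i) (funext fun _ ↦ hi) (hn ▸ hV.pow_right n)
  · rw [← relFree.rank_eq (K := K)]
    exact Group.rank_le_of_surjective rightHom rightHom_surjective

lemma le_eTime_sub_eTime_genericPowerSemidirect [Nontrivial V] (hK : IsPGroup p K)
    (htrans : ∀ v w : V, v ≠ 1 → w ≠ 1 → ∃ c : K, c • v = w)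
    (hfix : ∀ w : V, (∀ c : K, c • w = w) → w = 1)
    (hκ : Subgroup.closure (Set.range κ) = ⊤) {v : V} (hv : v ≠ 1) {N : ℕ}
    (hN : Nat.card V ^ N ≤ Nat.card K ^ Nat.card μ) :
    N + 1 - (1 - (Nat.card V : ℝ)⁻¹)⁻¹ - (Nat.card ρ + Nat.card μ + (1 - (p : ℝ)⁻¹)⁻¹) ≤
      eTime (GenericPowerSemidirect V μ κ) ∅ -
        eTime (GenericPowerSemidirect V μ κ) {inl (Function.const _ v)} := by
  have hconst := relFree.const_mem_range_specialize (μ := μ) hκ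
  have hsurj (ω : μ → K) : Function.Surjective fun h ↦ relFree.specialize κ h ω := fun c ↦
    (hconst c).imp fun _ hh ↦ congrFun hh ω
  have hupper := eTime_singleton_inl_le (relFree.isPGroup hK) htrans hconst
    (relFree.separatesPoints_range_specialize κ) (g := Function.const _ v) fun _ ↦ hv
  rw [relFree.rank_eq, Nat.card_sum, Nat.cast_add] at hupper
  exact sub_le_sub (le_eTime_powerSemidirect hfix hsurj (by rwa [Nat.card_fun])) hupper

end GenericPowerSemidirect

lemma mul_log_div_log_sub_le (m : ℕ) :
    ((m + 2 : ℕ) : ℝ) * (Real.log 16 - Real.log 9) / Real.log 9 - 8 ≤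
      Nat.log 9 (16 ^ m) + 1 - (1 - (9 : ℝ)⁻¹)⁻¹ - (2 + m + (1 - (2 : ℝ)⁻¹)⁻¹) := by
  have hlog9 : 0 < Real.log 9 := Real.log_pos (by norm_num)
  have hm : m * Real.log 16 ≤ (Nat.log 9 (16 ^ m) + 1) * Real.log 9 := by
    have hle : (16 : ℝ) ^ m ≤ 9 ^ (Nat.log 9 (16 ^ m) + 1) := by
      exact_mod_cast (Nat.lt_pow_succ_log_self (by norm_num) (16 ^ m)).le
    simpa using Real.log_le_log (by positivity) hle
  have hlog16 : 3 * Real.log 16 ≤ 4 * Real.log 9 := by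
    have hle : (16 : ℝ) ^ 3 ≤ 9 ^ 4 := by norm_num
    simpa using Real.log_le_log (by positivity) hle
  rw [sub_le_iff_le_add, div_le_iff₀ hlog9]
  push_cast
  norm_num
  nlinarith

/-- For every `d ≥ 2` there is a finite soluble group `G` with `d(G) = d` and an element
`g` with `e(G) - e(G,g) ≥ d·(log 16 - log 9)/log 9 - 8`. -/
theorem stmt19 (d : ℕ) (hd : 2 ≤ d) :
    ∃ (G : Type) (_ : Group G) (_ : Finite G) (_ : IsSolvable G),
      dMin G = d ∧ ∃ g : G,
        (d : ℝ) * (Real.log 16 - Real.log 9) / Real.log 9 - 8 ≤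
          eTime G ∅ - eTime G {g} := by
  obtain ⟨m, rfl⟩ := Nat.exists_eq_add_of_le' hd
  let F := GaloisField 3 2
  let K := SemilinearGroup (ZMod 3) F
  have hF : Nat.card F = 9 := GaloisField.card 3 2 two_ne_zero
  have hV : Nat.card (Multiplicative F) = 9 := hF
  have hK : Nat.card K = 16 := by
    rw [SemilinearGroup.card_eq, hF, GaloisField.finrank 3 two_ne_zero]
  have hp : IsPGroup 2 K := .of_card (n := 4) hK
  have : Nontrivial K := Finite.one_lt_card_iff_nontrivial.1 (by lia)
  have hone : Multiplicative.ofAdd (1 : F) ≠ 1 := one_ne_zero (α := F)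
  have htrans (v w : Multiplicative F) (hv : v ≠ 1) (hw : w ≠ 1) :=
    SemilinearGroup.exists_smul_eq (ZMod 3) hv hw
  have hfix (w : Multiplicative F) :=
    SemilinearGroup.eq_one_of_forall_smul_eq (k := ZMod 3) (w := w) (by rw [hF]; norm_num)
  obtain ⟨κ, hκ, hsmul⟩ := SemilinearGroup.exists_generators_and_smul_ofAdd_one_eq (ZMod 3) F
  refine ⟨GenericPowerSemidirect (Multiplicative F) (Fin m) κ, inferInstance, inferInstance,
    isSolvable_genericPowerSemidirect _ hp, ?_, .inl (Function.const _ (.ofAdd 1)), ?_⟩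
  · rw [dMin_eq_rank, rank_genericPowerSemidirect _ hp (by rw [hV]; norm_num) htrans hκ hsmul hone,
      Nat.card_fin, Nat.card_fin, add_comm]
  · have hgap := le_eTime_sub_eTime_genericPowerSemidirect (Fin m) hp htrans hfix hκ hone
      (N := Nat.log 9 (16 ^ m)) (by simpa [hV, hK] using Nat.pow_log_le_self 9 (by simp))
    rw [hV, Nat.card_fin, Nat.card_fin] at hgap
    exact (mul_log_div_log_sub_le m).trans hgap
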